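/- arXiv:2601.22728 — 3 statements merged into one kernel-verified Lean document; each statement's English description precedes it below -/
import Mathlib

section
/- Let S be a finite family of n ≥ 1 axis-parallel closed squares in the plane (each square is a product [a, a+s] × [b, b+s] with side length s > 0). Then there exists a finite family R of at most 9n axis-parallel closed rectangles (each a product of two closed intervals of positive length) whose interiors are pairwise disjoint, such that the union of the rectangles in R equals the union of the squares in S, and every rectangle in R is contained in some square of S. -/
/-!
Insert the squares in order of decreasing side length, and cut the part of each square `m` not
covered by its predecessors into vertical slabs: maximal runs of consecutive columns in which the
uncovered part is the same nonempty interval. These slabs are the rectangles; the work lies in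
counting them.

Only one property of squares is used: no earlier (larger) square has its projection to an axis
strictly inside the projection of a later one. This is invariant under monotone reparametrisation
of the axes, so each coordinate is replaced by its rank, and the squares become rectangles made of
unit cells of the integer grid.

Charge the slabs to *ends*. When square `k` is inserted, consider one of its sides and the cells
just outside it that are still free. Along the side they form an interval, because a larger square
meeting the side reaches one of its two endpoints; so a side has at most two ends, and `n` squares
create at most `8 n` ends (`end_unique`). If a slab of square `m` is not the leftmost one, then the
uncovered parts of the two columns meeting at its left boundary differ. Following that boundary
line up and down from a height where they differ, one reaches an end of an earlier square, on this
line, whose outer cell is covered for the first time by `m` (`exists_end`). Hence an end determines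
the pair `(m, left boundary)`, and there are at most `n + 8 n` slabs.
-/


/-- The axis-parallel closed square with bottom-left corner `(a, b)` and side length `s`. -/
def squareSet (a b s : ℝ) : Set (ℝ × ℝ) :=
  Set.Icc a (a + s) ×ˢ Set.Icc b (b + s)

/-- The axis-parallel closed rectangle `[a, a'] × [b, b']`. -/
def rectSet (a a' b b' : ℝ) : Set (ℝ × ℝ) :=
  Set.Icc a a' ×ˢ Set.Icc b b'

/-- The (open) interior of the rectangle `[a, a'] × [b, b']`. -/
def rectInterior (a a' b b' : ℝ) : Set (ℝ × ℝ) :=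
  Set.Ioo a a' ×ˢ Set.Ioo b b'

namespace SquareUnion

variable {n : ℕ} (a a' b b' : Fin n → ℤ)

/-! ### Cells, ends and their uniqueness -/

/-- The unit cell with lower left corner `(x, y)` lies in the grid rectangle
`[a k, a' k) × [b k, b' k)`. -/
def Cell (k : Fin n) (x y : ℤ) : Prop := a k ≤ x ∧ x < a' k ∧ b k ≤ y ∧ y < b' k

/-- The cell `(x, y)` is covered by a rectangle inserted before `k`. -/
def Cov (k : Fin n) (x y : ℤ) : Prop := ∃ j < k, Cell a a' b b' j x y

/-- The cell `(x, y)` is first covered when the rectangle `k` is inserted. -/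
def New (k : Fin n) (x y : ℤ) : Prop := Cell a a' b b' k x y ∧ ¬ Cov a a' b b' k x y

/-- The step `1` or `-1` encoded by a Boolean. -/
def sgn (s : Bool) : ℤ := if s then 1 else -1

/-- `IsEnd k (o, s, t) x₀ x y`: the cell `(x, y)` lies just outside a side of the rectangle `k` and
is free when `k` is inserted, and it is the last such cell along that side in the relevant
direction. The side is vertical if `o` is true and horizontal otherwise. In both cases
`(x + sgn s, y)` and `(x, y + sgn t)` are the horizontal and the vertical neighbour of `(x, y)` at
the grid point where the end sits; one of them is in `k`, and the other one is the next outer cell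
along the side. The first coordinate of that grid point is `x₀`. -/
def IsEnd (k : Fin n) (l : Bool × Bool × Bool) (x₀ x y : ℤ) : Prop :=
  x₀ = max x (x + sgn l.2.1) ∧ ¬ Cell a a' b b' k x y ∧ ¬ Cov a a' b b' k x y ∧
  if l.1 then
    Cell a a' b b' k (x + sgn l.2.1) y ∧
      (¬ Cell a a' b b' k (x + sgn l.2.1) (y + sgn l.2.2) ∨ Cov a a' b b' k x (y + sgn l.2.2))
  else
    Cell a a' b b' k x (y + sgn l.2.2) ∧
      (¬ Cell a a' b b' k (x + sgn l.2.1) (y + sgn l.2.2) ∨ Cov a a' b b' k (x + sgn l.2.1) y)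

variable {a a' b b'}

lemma Cov.first {m : Fin n} {x y : ℤ} (h : Cov a a' b b' m x y) :
    ∃ k < m, New a a' b b' k x y := by
  induction m using WellFoundedLT.induction with
  | ind m ih =>
    obtain ⟨j, hj, hc⟩ := h
    by_cases hu : Cov a a' b b' j x y
    · obtain ⟨k, hk, h⟩ := ih j hj hu
      exact ⟨k, hk.trans hj, h⟩
    · exact ⟨j, hj, hc, hu⟩

lemma Cov.mono {k m : Fin n} (hkm : k ≤ m) {x y : ℤ} (h : Cov a a' b b' k x y) :
    Cov a a' b b' m x y := by
  obtain ⟨j, hj, hc⟩ := h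
  exact ⟨j, hj.trans_le hkm, hc⟩

/-- The free outer cells along a side form an interval, so the label of an end determines its
position. -/
lemma end_unique (hx : ∀ j k, j < k → ¬ (a k < a j ∧ a' j < a' k))
    (hy : ∀ j k, j < k → ¬ (b k < b j ∧ b' j < b' k))
    {k : Fin n} {l : Bool × Bool × Bool} {x₀ x y z₀ z w : ℤ}
    (h : IsEnd a a' b b' k l x₀ x y) (h' : IsEnd a a' b b' k l z₀ z w) :
    x₀ = z₀ ∧ x = z ∧ y = w := by
  obtain ⟨o, s, t⟩ := l
  obtain ⟨e, h1, h2, h3⟩ := h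
  obtain ⟨e', h1', h2', h3'⟩ := h'
  have key : x = z ∧ y = w := by
    cases o
    · simp only [Bool.false_eq_true, if_false] at h3 h3'
      obtain ⟨h3, h4⟩ := h3
      obtain ⟨h3', h4'⟩ := h3'
      have ew : y = w := by
        cases t <;> simp only [sgn, Cell] at * <;> simp at * <;> omega
      subst ew
      refine ⟨?_, rfl⟩
      have aux : ∀ j < k, ∀ u, Cell a a' b b' j u y → ¬ Cell a a' b b' j x y →
          ¬ Cell a a' b b' j z y → ¬ (x < u ∧ u < z) ∧ ¬ (z < u ∧ u < x) := by
        intro j hj u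
        have := hx j k hj
        simp only [Cell] at *
        omega
      have c1 : ∀ j < k, ¬ Cell a a' b b' j x y := fun j hj hc => h2 ⟨j, hj, hc⟩
      have c2 : ∀ j < k, ¬ Cell a a' b b' j z y := fun j hj hc => h2' ⟨j, hj, hc⟩
      rcases h4 with h4 | ⟨j, hj, h4⟩ <;> rcases h4' with h4' | ⟨j', hj', h4'⟩
      all_goals
        first
          | have q1 := c1 j hj
            have q2 := c2 j hj
            have q3 := aux j hj _ h4 q1 q2
          | skip
        first
          | have r1 := c1 j' hj'
            have r2 := c2 j' hj'
            have r3 := aux j' hj' _ h4' r1 r2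
          | skip
        clear aux c1 c2 hx hy h2 h2'
        cases s <;> simp only [sgn, Cell] at * <;> simp at * <;> omega
    · simp only [if_true] at h3 h3'
      obtain ⟨h3, h4⟩ := h3
      obtain ⟨h3', h4'⟩ := h3'
      have ew : x = z := by
        cases s <;> simp only [sgn, Cell] at * <;> simp at * <;> omega
      subst ew
      refine ⟨rfl, ?_⟩
      have aux : ∀ j < k, ∀ u, Cell a a' b b' j x u → ¬ Cell a a' b b' j x y →
          ¬ Cell a a' b b' j x w → ¬ (y < u ∧ u < w) ∧ ¬ (w < u ∧ u < y) := by
        intro j hj u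
        have := hy j k hj
        simp only [Cell] at *
        omega
      have c1 : ∀ j < k, ¬ Cell a a' b b' j x y := fun j hj hc => h2 ⟨j, hj, hc⟩
      have c2 : ∀ j < k, ¬ Cell a a' b b' j x w := fun j hj hc => h2' ⟨j, hj, hc⟩
      rcases h4 with h4 | ⟨j, hj, h4⟩ <;> rcases h4' with h4' | ⟨j', hj', h4'⟩
      all_goals
        first
          | have q1 := c1 j hj
            have q2 := c2 j hj
            have q3 := aux j hj _ h4 q1 q2
          | skip
        first
          | have r1 := c1 j' hj'
            have r2 := c2 j' hj'
            have r3 := aux j' hj' _ h4' r1 r2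
          | skip
        clear aux c1 c2 hx hy h2 h2'
        cases t <;> simp only [sgn, Cell] at * <;> simp at * <;> omega
  obtain ⟨rfl, rfl⟩ := key
  exact ⟨e.trans e'.symm, rfl, rfl⟩

/-! ### Finding an end on the boundary of a slab -/

/-- A free cell whose horizontal and vertical neighbours are both covered sits at an end: the end
is created by the later of the two rectangles first covering these neighbours. -/
lemma end_of_concave {m : Fin n} {x y : ℤ} (s t : Bool)
    (h0 : ¬ Cov a a' b b' m x y) (h1 : Cov a a' b b' m (x + sgn s) y)
    (h2 : Cov a a' b b' m x (y + sgn t)) :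
    ∃ k l, IsEnd a a' b b' k l (max x (x + sgn s)) x y := by
  obtain ⟨k₁, hk₁, c₁, u₁⟩ := h1.first
  obtain ⟨k₂, hk₂, c₂, u₂⟩ := h2.first
  have free : ∀ k < m, ¬ Cell a a' b b' k x y := fun k hk hc => h0 ⟨k, hk, hc⟩
  rcases lt_trichotomy k₁ k₂ with h | rfl | h
  · exact ⟨k₂, (false, s, t), rfl, free _ hk₂, fun hc => h0 (hc.mono hk₂.le), by
      simpa using ⟨c₂, Or.inr ⟨k₁, h, c₁⟩⟩⟩
  -- A rectangle containing both neighbours would contain the free cell.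
  · refine absurd ?_ (free _ hk₁)
    simp only [Cell] at *
    omega
  · exact ⟨k₁, (true, s, t), rfl, free _ hk₁, fun hc => h0 (hc.mono hk₁.le), by
      simpa using ⟨c₁, Or.inr ⟨k₂, h, c₂⟩⟩⟩

/-- A free cell whose horizontal neighbour is covered while the cell diagonally across is free sits
at an end: the rectangle first covering that neighbour has a vertical side stopping there. -/
lemma end_of_convex {m : Fin n} {x y : ℤ} (s t : Bool)
    (h0 : ¬ Cov a a' b b' m x y) (h1 : Cov a a' b b' m (x + sgn s) y)
    (h3 : ¬ Cov a a' b b' m (x + sgn s) (y + sgn t)) :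
    ∃ k l, IsEnd a a' b b' k l (max x (x + sgn s)) x y := by
  obtain ⟨k, hk, c, u⟩ := h1.first
  exact ⟨k, (true, s, t), rfl, fun hc => h0 ⟨k, hk, hc⟩, fun hc => h0 (hc.mono hk.le), by
    simpa using ⟨c, Or.inl fun hc => h3 ⟨k, hk, hc⟩⟩⟩

/-- Follow the common boundary line of two columns, one free and one covered, in a vertical
direction: either the situation persists within the range of `m`, or an end shows up. -/
lemma walk {m : Fin n} {x y : ℤ} (s t : Bool)
    (hno : ∀ k l y, New a a' b b' m x y → ¬ IsEnd a a' b b' k l (max x (x + sgn s)) x y)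
    (h0 : New a a' b b' m x y) (h1 : Cov a a' b b' m (x + sgn s) y) (d : ℕ)
    (hd : b m ≤ y + d * sgn t ∧ y + d * sgn t < b' m) :
    New a a' b b' m x (y + d * sgn t) ∧ Cov a a' b b' m (x + sgn s) (y + d * sgn t) := by
  induction d with
  | zero => simpa using ⟨h0, h1⟩
  | succ d ih =>
    have hb : b m ≤ y ∧ y < b' m := h0.1.2.2
    have ha : a m ≤ x ∧ x < a' m := ⟨h0.1.1, h0.1.2.1⟩
    obtain ⟨i1, i2⟩ := ih (by
      cases t <;> simp only [sgn] at * <;> push_cast at * <;> simp at * <;> omega)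
    have e : y + ((d + 1 : ℕ) : ℤ) * sgn t = (y + d * sgn t) + sgn t := by push_cast; ring
    rw [e] at hd ⊢
    have n1 : ¬ Cov a a' b b' m x ((y + d * sgn t) + sgn t) := fun hc =>
      let ⟨k, l, h⟩ := end_of_concave s t i1.2 i2 hc
      hno k l _ i1 h
    refine ⟨⟨⟨ha.1, ha.2, hd.1, hd.2⟩, n1⟩, ?_⟩
    by_contra hc
    obtain ⟨k, l, h⟩ := end_of_convex s t i1.2 i2 hc
    exact hno k l _ i1 h

/-- Applying `walk` upwards and downwards. -/
lemma walk_all {m : Fin n} {x y : ℤ} (s : Bool)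
    (hno : ∀ k l y, New a a' b b' m x y → ¬ IsEnd a a' b b' k l (max x (x + sgn s)) x y)
    (h0 : New a a' b b' m x y) (h1 : Cov a a' b b' m (x + sgn s) y) (w : ℤ)
    (hw : b m ≤ w ∧ w < b' m) :
    New a a' b b' m x w ∧ Cov a a' b b' m (x + sgn s) w := by
  rcases le_total y w with h | h
  · obtain ⟨d, hd⟩ := Int.eq_ofNat_of_zero_le (sub_nonneg.2 h)
    have e : w = y + d * sgn true := by simp only [sgn, if_true]; omega
    rw [e] at hw ⊢
    exact walk s true hno h0 h1 d hw
  · obtain ⟨d, hd⟩ := Int.eq_ofNat_of_zero_le (sub_nonneg.2 h)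
    have e : w = y + d * sgn false := by simp [sgn]; omega
    rw [e] at hw ⊢
    exact walk s false hno h0 h1 d hw

/-- If the new parts of the columns `x₀ - 1` and `x₀` of `m` differ, column `x₀` has a new cell, and
so has some column further left, then the line between them carries an end whose outer cell is
new. -/
lemma exists_end (hx : ∀ j k, j < k → ¬ (a k < a j ∧ a' j < a' k))
    {m : Fin n} {x₀ : ℤ} (hne : ∃ y, New a a' b b' m x₀ y)
    (hdiff : ¬ ∀ y, New a a' b b' m x₀ y ↔ New a a' b b' m (x₀ - 1) y)
    (hleft : ∃ x < x₀, ∃ y, New a a' b b' m x y) :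
    ∃ k l x y, IsEnd a a' b b' k l x₀ x y ∧ New a a' b b' m x y := by
  by_contra hno
  push Not at hno hdiff
  obtain ⟨y₁, hy₁⟩ := hne
  obtain ⟨x₂, hx₂, y₂, hy₂⟩ := hleft
  obtain ⟨y, hy⟩ := hdiff
  have hc₁ := hy₁.1
  have hc₂ := hy₂.1
  simp only [Cell] at hc₁ hc₂
  rcases hy with ⟨h0, h1⟩ | ⟨h0, h1⟩
  · have hc : Cov a a' b b' m (x₀ + sgn false) y := by
      by_contra hc
      have h0c := h0.1
      simp only [Cell] at h0c
      refine h1 ⟨?_, hc⟩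
      simp only [Cell]
      omega
    have e : max x₀ (x₀ + sgn false) = x₀ := by simp [sgn]
    obtain ⟨-, j, hj, hcj⟩ := walk_all (w := y₂) false
      (fun k l y hn he => hno k l x₀ y (by rwa [e] at he) hn) h0 hc ⟨hc₂.2.2.1, hc₂.2.2.2⟩
    obtain ⟨⟨-, hfr⟩, -⟩ := walk_all (w := y₂) false
      (fun k l y hn he => hno k l x₀ y (by rwa [e] at he) hn) h0 hc ⟨hc₂.2.2.1, hc₂.2.2.2⟩
    have hfr' : ¬ Cell a a' b b' j x₀ y₂ := fun h => hfr ⟨j, hj, h⟩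
    -- `j` covers the left column but not the right one, so it reaches the left side of `m`.
    refine hy₂.2 ⟨j, hj, ?_⟩
    have := hx j m hj
    simp only [Cell, sgn] at *
    simp at *
    omega
  · have ex : x₀ - 1 + sgn true = x₀ := by simp [sgn]
    have e : max (x₀ - 1) (x₀ - 1 + sgn true) = x₀ := by rw [ex]; simp
    have hc : Cov a a' b b' m (x₀ - 1 + sgn true) y := by
      rw [ex]
      by_contra hc
      refine h0 ⟨?_, hc⟩
      have h1c := h1.1
      simp only [Cell] at *
      omega
    have := (walk_all (w := y₁) true
      (fun k l y hn he => hno k l _ y (by rwa [e] at he) hn) h1 hc ⟨hc₁.2.2.1, hc₁.2.2.2⟩).2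
    rw [ex] at this
    exact hy₁.2 this

/-! ### The slabs -/

lemma New.unique {k m : Fin n} {x y : ℤ} (h : New a a' b b' k x y) (h' : New a a' b b' m x y) :
    k = m := by
  rcases lt_trichotomy k m with hl | hl | hl
  · exact absurd ⟨k, hl, h.1⟩ h'.2
  · exact hl
  · exact absurd ⟨m, hl, h'.1⟩ h.2

/-- The new cells of a column form an interval. -/
lemma New.between (hy : ∀ j k, j < k → ¬ (b k < b j ∧ b' j < b' k)) {m : Fin n} {x y z w : ℤ}
    (h : New a a' b b' m x y) (h' : New a a' b b' m x z) (hyw : y ≤ w) (hwz : w ≤ z) :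
    New a a' b b' m x w := by
  obtain ⟨c, u⟩ := h
  obtain ⟨c', u'⟩ := h'
  refine ⟨by simp only [Cell] at *; omega, ?_⟩
  rintro ⟨j, hj, hc⟩
  have h1 : ¬ Cell a a' b b' j x y := fun h => u ⟨j, hj, h⟩
  have h2 : ¬ Cell a a' b b' j x z := fun h => u' ⟨j, hj, h⟩
  have := hy j m hj
  simp only [Cell] at *
  omega

/-- The column `x₀` has a new cell for `m`, and its new cells are at other heights than those of the
preceding column: a slab of `m` starts here. -/
def Start (a a' b b' : Fin n → ℤ) (p : Fin n × ℤ) : Prop :=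
  (∃ y, New a a' b b' p.1 p.2 y) ∧
    ¬ ∀ y, New a a' b b' p.1 p.2 y ↔ New a a' b b' p.1 (p.2 - 1) y

/-- The slab `[x₀, x₁) × [lo, hi)` starting in a given column, extended to the right as far as
possible. -/
lemma exists_slab (hy : ∀ j k, j < k → ¬ (b k < b j ∧ b' j < b' k)) (m : Fin n) (x₀ : ℤ)
    (hne : ∃ y, New a a' b b' m x₀ y) :
    ∃ x₁ lo hi, x₀ < x₁ ∧ lo < hi ∧
      (∀ x, x₀ ≤ x → x < x₁ → ∀ y, New a a' b b' m x y ↔ lo ≤ y ∧ y < hi) ∧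
      ¬ ∀ y, New a a' b b' m x₁ y ↔ New a a' b b' m x₀ y := by
  obtain ⟨lo, hlo, hlo'⟩ := Int.exists_least_of_bdd (P := fun y => New a a' b b' m x₀ y)
    ⟨b m, fun z hz => hz.1.2.2.1⟩ hne
  obtain ⟨hi, hhi, hhi'⟩ := Int.exists_greatest_of_bdd (P := fun y => New a a' b b' m x₀ y)
    ⟨b' m, fun z hz => hz.1.2.2.2.le⟩ hne
  obtain ⟨x₁, ⟨hx₁, hd⟩, hmin⟩ := Int.exists_least_of_bdd
    (P := fun x => x₀ < x ∧ ¬ ∀ y, New a a' b b' m x y ↔ New a a' b b' m x₀ y)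
    ⟨x₀, fun z hz => hz.1.le⟩
    ⟨a' m, hlo.1.2.1, fun h => by
      have := ((h lo).2 hlo).1.2.1
      omega⟩
  refine ⟨x₁, lo, hi + 1, hx₁, ?_, ?_, hd⟩
  · have := hlo' hi hhi
    omega
  · intro x h0 h1 y
    have e : ∀ y, New a a' b b' m x y ↔ New a a' b b' m x₀ y := by
      by_contra hc
      rcases h0.eq_or_lt with rfl | h0
      · exact hc fun _ => Iff.rfl
      · have := hmin x ⟨h0, hc⟩
        omega
    rw [e]
    exact ⟨fun h => ⟨hlo' y h, Int.lt_add_one_of_le (hhi' y h)⟩,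
      fun h => hlo.between hy hhi h.1 (by omega)⟩

/-- Every new cell lies to the right of a start, with equal new parts in all columns between. -/
lemma exists_start {m : Fin n} {x y : ℤ} (h : New a a' b b' m x y) :
    ∃ x₀ ≤ x, Start a a' b b' (m, x₀) ∧
      ∀ z, x₀ ≤ z → z ≤ x → ∀ w, New a a' b b' m z w ↔ New a a' b b' m x w := by
  obtain ⟨z, ⟨hz, hd⟩, hmax⟩ := Int.exists_greatest_of_bdd
    (P := fun z => z < x ∧ ¬ ∀ w, New a a' b b' m z w ↔ New a a' b b' m x w)
    ⟨x, fun z hz => hz.1.le⟩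
    ⟨a m - 1, by have := h.1.1; omega, fun h' => by
      have := ((h' y).2 h).1.1
      omega⟩
  have key : ∀ u, z + 1 ≤ u → u ≤ x → ∀ w, New a a' b b' m u w ↔ New a a' b b' m x w := by
    intro u hu hux
    by_contra hc
    rcases hux.eq_or_lt with rfl | hux
    · exact hc fun _ => Iff.rfl
    · have := hmax u ⟨hux, hc⟩
      omega
  refine ⟨z + 1, hz, ⟨⟨y, (key _ le_rfl hz y).2 h⟩, fun h' => hd fun w => ?_⟩, key⟩
  rw [← key _ le_rfl hz w]
  simpa using (h' w).symm

/-- Charging every start to a rectangle, if it is the leftmost one of this rectangle, and to an end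
otherwise. -/
lemma exists_charge (hx : ∀ j k, j < k → ¬ (a k < a j ∧ a' j < a' k))
    (hy : ∀ j k, j < k → ¬ (b k < b j ∧ b' j < b' k)) :
    ∃ f : {p // Start a a' b b' p} → Fin n × Option (Bool × Bool × Bool), Function.Injective f := by
  classical
  have ex : ∀ p : {p // Start a a' b b' p}, ∃ q : Fin n × Option (Bool × Bool × Bool),
      (q = (p.1.1, none) ∧ ¬ ∃ x < p.1.2, ∃ y, New a a' b b' p.1.1 x y) ∨
      (∃ k l x y, q = (k, some l) ∧ IsEnd a a' b b' k l p.1.2 x y ∧ New a a' b b' p.1.1 x y) := by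
    rintro ⟨⟨m, x₀⟩, hne, hd⟩
    by_cases hl : ∃ x < x₀, ∃ y, New a a' b b' m x y
    · obtain ⟨k, l, x, y, h1, h2⟩ := exists_end hx hne hd hl
      exact ⟨(k, some l), Or.inr ⟨k, l, x, y, rfl, h1, h2⟩⟩
    · exact ⟨(m, none), Or.inl ⟨rfl, hl⟩⟩
  choose f hf using ex
  refine ⟨f, ?_⟩
  rintro ⟨⟨m, x₀⟩, hp⟩ ⟨⟨m', x₀'⟩, hp'⟩ e
  have h1 := hf ⟨⟨m, x₀⟩, hp⟩
  have h2 := hf ⟨⟨m', x₀'⟩, hp'⟩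
  rw [e] at h1
  simp only [Subtype.mk.injEq, Prod.mk.injEq]
  rcases h1 with ⟨e1, h1⟩ | ⟨k, l, x, y, e1, h1, hn1⟩ <;>
    rcases h2 with ⟨e2, h2⟩ | ⟨k', l', x', y', e2, h2, hn2⟩ <;> rw [e1] at e2 <;>
    simp only [Prod.mk.injEq, reduceCtorEq, and_false, Option.some.injEq, and_true] at e2
  · subst e2
    refine ⟨rfl, ?_⟩
    rcases lt_trichotomy x₀ x₀' with hlt | hlt | hlt
    · exact absurd ⟨x₀, hlt, hp.1⟩ h2
    · exact hlt
    · exact absurd ⟨x₀', hlt, hp'.1⟩ h1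
  · obtain ⟨rfl, rfl⟩ := e2
    obtain ⟨rfl, rfl, rfl⟩ := end_unique hx hy h1 h2
    exact ⟨hn1.unique hn2, rfl⟩

/-- The decomposition on the grid: the half-open boxes `[A t, A' t) × [B t, B' t)` partition the
union of the given ones. -/
lemma grid (hx : ∀ j k, j < k → ¬ (a k < a j ∧ a' j < a' k))
    (hy : ∀ j k, j < k → ¬ (b k < b j ∧ b' j < b' k)) :
    ∃ (T : Type) (_ : Fintype T) (A A' B B' : T → ℤ), Fintype.card T ≤ 9 * n ∧
      (∀ t, A t < A' t ∧ B t < B' t) ∧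
      (∀ t u x y, A t ≤ x → x < A' t → B t ≤ y → y < B' t →
        A u ≤ x → x < A' u → B u ≤ y → y < B' u → t = u) ∧
      (∀ x y, (∃ t, A t ≤ x ∧ x < A' t ∧ B t ≤ y ∧ y < B' t) ↔ ∃ i, Cell a a' b b' i x y) ∧
      ∀ t, ∃ i, a i ≤ A t ∧ A' t ≤ a' i ∧ b i ≤ B t ∧ B' t ≤ b' i := by
  obtain ⟨f, hf⟩ := exists_charge hx hy
  choose x₁ lo hi hlt hlh hcol hend using
    fun p : {p // Start a a' b b' p} => exists_slab hy p.1.1 p.1.2 p.2.1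
  refine ⟨{p // Start a a' b b' p}, Fintype.ofInjective f hf, fun p => p.1.2, x₁, lo, hi,
    ?_, fun t => ⟨hlt t, hlh t⟩, ?_, ?_, ?_⟩
  · let := Fintype.ofInjective f hf
    refine (Fintype.card_le_of_injective f hf).trans ?_
    simp only [Fintype.card_prod, Fintype.card_fin, Fintype.card_option, Fintype.card_bool]
    omega
  · intro t u x y h1 h2 h3 h4 g1 g2 g3 g4
    simp only at h1 g1
    have e : t.1.1 = u.1.1 :=
      ((hcol t x h1 h2 y).2 ⟨h3, h4⟩).unique ((hcol u x g1 g2 y).2 ⟨g3, g4⟩)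
    -- No slab of the same rectangle starts strictly inside another one.
    have key : ∀ t u : {p // Start a a' b b' p}, t.1.1 = u.1.1 → t.1.2 < u.1.2 →
        u.1.2 < x₁ t → False := by
      intro t u e h h'
      refine u.2.2 fun y => ?_
      rw [← e, hcol t _ h.le h' y, hcol t _ (by omega) (by omega) y]
    apply Subtype.ext
    refine Prod.ext e ?_
    rcases lt_trichotomy t.1.2 u.1.2 with h | h | h
    · exact (key t u e h (by omega)).elim
    · exact h
    · exact (key u t e.symm h (by omega)).elim
  · intro x y
    constructor
    · rintro ⟨t, h1, h2, h3, h4⟩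
      exact ⟨_, ((hcol t x h1 h2 y).2 ⟨h3, h4⟩).1⟩
    · rintro ⟨i, hi⟩
      obtain ⟨m, hm⟩ : ∃ m, New a a' b b' m x y := by
        by_cases hc : Cov a a' b b' i x y
        · obtain ⟨k, -, h⟩ := hc.first
          exact ⟨k, h⟩
        · exact ⟨i, hi, hc⟩
      obtain ⟨x₀, hle, hs, hc⟩ := exists_start hm
      have hlt' : x < x₁ ⟨(m, x₀), hs⟩ := by
        by_contra hge
        refine hend ⟨(m, x₀), hs⟩ fun w => ?_
        have := hlt ⟨(m, x₀), hs⟩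
        simp only at this ⊢
        rw [hc _ this.le (by omega) w, hc _ le_rfl hle w]
      exact ⟨⟨(m, x₀), hs⟩, hle, hlt', (hcol ⟨(m, x₀), hs⟩ x hle hlt' y).1 hm⟩
  · intro t
    have h1 := hlt t
    have h2 := hlh t
    have c1 := ((hcol t t.1.2 le_rfl h1 (lo t)).2 ⟨le_rfl, h2⟩).1
    have c2 := ((hcol t (x₁ t - 1) (by omega) (by omega) (hi t - 1)).2 ⟨by omega, by omega⟩).1
    refine ⟨t.1.1, ?_⟩
    simp only [Cell] at c1 c2 ⊢
    omega

/-! ### From the grid back to the plane -/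

/-- The rank of a real with respect to a finite set, with a partial inverse `g` taking values in
that set. -/
lemma exists_rank (V : Finset ℝ) : ∃ (ρ : ℝ → ℤ) (g : ℤ → ℝ),
    (∀ u ∈ V, ∀ x, u ≤ x ↔ ρ u ≤ ρ x) ∧
    ∀ u ∈ V, ∀ w ∈ V, ∀ z, ρ u ≤ z → z ≤ ρ w → g z ∈ V ∧ ρ (g z) = z := by
  classical
  set ρ : ℝ → ℤ := fun x => ((V.filter (· ≤ x)).card : ℤ) with hρ
  have mono : ∀ x y, x ≤ y → ρ x ≤ ρ y := by
    intro x y h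
    simp only [hρ]
    exact_mod_cast Finset.card_le_card fun v hv => by
      simp only [Finset.mem_filter] at hv ⊢
      exact ⟨hv.1, hv.2.trans h⟩
  have strict : ∀ u ∈ V, ∀ x, x < u → ρ x < ρ u := by
    intro u hu x h
    simp only [hρ]
    refine Int.ofNat_lt.2 (Finset.card_lt_card ?_)
    refine Finset.ssubset_iff_of_subset (fun v hv => ?_) |>.2 ⟨u, ?_, ?_⟩
    · simp only [Finset.mem_filter] at hv ⊢
      exact ⟨hv.1, hv.2.trans h.le⟩
    · simp [hu]
    · simp [h]
  have iff : ∀ u ∈ V, ∀ x, u ≤ x ↔ ρ u ≤ ρ x := fun u hu x =>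
    ⟨mono u x, fun h => not_lt.1 fun h' => (strict u hu x h').not_ge h⟩
  have inj : Set.InjOn ρ V := fun u hu w hw h =>
    le_antisymm ((iff u hu w).2 h.le) ((iff w hw u).2 h.ge)
  -- `ρ` maps `V` injectively, hence bijectively, to `{1, …, #V}`.
  have sub : V.image ρ ⊆ Finset.Icc 1 (V.card : ℤ) := by
    intro z hz
    obtain ⟨u, hu, rfl⟩ := Finset.mem_image.1 hz
    simp only [hρ, Finset.mem_Icc]
    refine ⟨?_, by exact_mod_cast Finset.card_filter_le _ _⟩
    have : 0 < (V.filter (· ≤ u)).card := Finset.card_pos.2 ⟨u, by simp [hu]⟩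
    omega
  have img : V.image ρ = Finset.Icc 1 (V.card : ℤ) :=
    Finset.eq_of_subset_of_card_le sub (by simp [Finset.card_image_of_injOn inj])
  have surj : ∀ z, ∃ v, z ∈ Finset.Icc 1 (V.card : ℤ) → v ∈ V ∧ ρ v = z := by
    intro z
    by_cases hz : z ∈ Finset.Icc 1 (V.card : ℤ)
    · obtain ⟨v, hv⟩ := Finset.mem_image.1 (img ▸ hz)
      exact ⟨v, fun _ => hv⟩
    · exact ⟨0, fun h => absurd h hz⟩
  choose g hg using surj
  refine ⟨ρ, g, iff, fun u hu w hw z h1 h2 => hg z ?_⟩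
  have m1 := Finset.mem_Icc.1 (sub (Finset.mem_image_of_mem ρ hu))
  have m2 := Finset.mem_Icc.1 (sub (Finset.mem_image_of_mem ρ hw))
  exact Finset.mem_Icc.2 ⟨by omega, by omega⟩

/-- The theorem for squares listed in order of decreasing side length. -/
lemma sorted (a b s : Fin n → ℝ) (hs : ∀ i, 0 < s i) (hanti : ∀ j k, j < k → s k ≤ s j) :
    ∃ (T : Type) (_ : Fintype T) (A A' B B' : T → ℝ),
      Fintype.card T ≤ 9 * n ∧
      (∀ j, A j < A' j ∧ B j < B' j) ∧
      (∀ j k, j ≠ k →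
        Disjoint (rectInterior (A j) (A' j) (B j) (B' j))
          (rectInterior (A k) (A' k) (B k) (B' k))) ∧
      (⋃ j, rectSet (A j) (A' j) (B j) (B' j)) = (⋃ i, squareSet (a i) (b i) (s i)) ∧
      (∀ j, ∃ i, rectSet (A j) (A' j) (B j) (B' j) ⊆ squareSet (a i) (b i) (s i)) := by
  classical
  obtain ⟨ρ, g, hρ, hg⟩ := exists_rank
    (Finset.univ.image a ∪ Finset.univ.image fun i => a i + s i)
  obtain ⟨σ, h, hσ, hh⟩ := exists_rank
    (Finset.univ.image b ∪ Finset.univ.image fun i => b i + s i)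
  set V := Finset.univ.image a ∪ Finset.univ.image fun i => a i + s i with hV
  set W := Finset.univ.image b ∪ Finset.univ.image fun i => b i + s i with hW
  have va : ∀ i, a i ∈ V := fun i => by simp [hV]
  have va' : ∀ i, a i + s i ∈ V := fun i => by simp [hV]
  have wb : ∀ i, b i ∈ W := fun i => by simp [hW]
  have wb' : ∀ i, b i + s i ∈ W := fun i => by simp [hW]
  have ltρ : ∀ u ∈ V, ∀ x, x < u ↔ ρ x < ρ u := fun u hu x => by
    rw [← not_le, hρ u hu, not_le]
  have ltσ : ∀ u ∈ W, ∀ x, x < u ↔ σ x < σ u := fun u hu x => by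
    rw [← not_le, hσ u hu, not_le]
  obtain ⟨T, fT, A, A', B, B', hcard, hpos, hdisj, hcov, hsub⟩ :=
    grid (a := fun i => ρ (a i)) (a' := fun i => ρ (a i + s i))
      (b := fun i => σ (b i)) (b' := fun i => σ (b i + s i))
      (by
        rintro j k hjk ⟨h1, h2⟩
        have h1 := (ltρ _ (va j) _).2 h1
        have h2 := (ltρ _ (va' k) _).2 h2
        linarith [hanti j k hjk])
      (by
        rintro j k hjk ⟨h1, h2⟩
        have h1 := (ltσ _ (wb j) _).2 h1
        have h2 := (ltσ _ (wb' k) _).2 h2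
        linarith [hanti j k hjk])
  have hA : ∀ t, g (A t) ∈ V ∧ ρ (g (A t)) = A t := fun t => by
    obtain ⟨i, h1, h2, -, -⟩ := hsub t
    exact hg _ (va i) _ (va' i) _ h1 ((hpos t).1.le.trans h2)
  have hA' : ∀ t, g (A' t) ∈ V ∧ ρ (g (A' t)) = A' t := fun t => by
    obtain ⟨i, h1, h2, -, -⟩ := hsub t
    exact hg _ (va i) _ (va' i) _ (h1.trans (hpos t).1.le) h2
  have hB : ∀ t, h (B t) ∈ W ∧ σ (h (B t)) = B t := fun t => by
    obtain ⟨i, -, -, h1, h2⟩ := hsub t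
    exact hh _ (wb i) _ (wb' i) _ h1 ((hpos t).2.le.trans h2)
  have hB' : ∀ t, h (B' t) ∈ W ∧ σ (h (B' t)) = B' t := fun t => by
    obtain ⟨i, -, -, h1, h2⟩ := hsub t
    exact hh _ (wb i) _ (wb' i) _ (h1.trans (hpos t).2.le) h2
  have hposR : ∀ t, g (A t) < g (A' t) ∧ h (B t) < h (B' t) := fun t => by
    rw [ltρ _ (hA' t).1, ltσ _ (hB' t).1, (hA t).2, (hA' t).2, (hB t).2, (hB' t).2]
    exact hpos t
  have memT : ∀ t x y, (g (A t) ≤ x ∧ x < g (A' t)) ∧ h (B t) ≤ y ∧ y < h (B' t) ↔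
      A t ≤ ρ x ∧ ρ x < A' t ∧ B t ≤ σ y ∧ σ y < B' t := fun t x y => by
    rw [hρ _ (hA t).1, ltρ _ (hA' t).1, hσ _ (hB t).1, ltσ _ (hB' t).1, (hA t).2, (hA' t).2,
      (hB t).2, (hB' t).2, and_assoc]
  have union : (⋃ t, Set.Ico (g (A t)) (g (A' t)) ×ˢ Set.Ico (h (B t)) (h (B' t))) =
      ⋃ i, Set.Ico (a i) (a i + s i) ×ˢ Set.Ico (b i) (b i + s i) := by
    ext ⟨x, y⟩
    simp only [Set.mem_iUnion, Set.mem_prod, Set.mem_Ico, memT, hcov]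
    simp only [Cell]
    refine exists_congr fun i => ?_
    rw [hρ _ (va i), ltρ _ (va' i), hσ _ (wb i), ltσ _ (wb' i), and_assoc]
  refine ⟨T, fT, fun t => g (A t), fun t => g (A' t), fun t => h (B t), fun t => h (B' t),
    hcard, hposR, ?_, ?_, ?_⟩
  · intro t u htu
    rw [Set.disjoint_left]
    rintro ⟨x, y⟩ ⟨h1, h2⟩ ⟨g1, g2⟩
    obtain ⟨p1, p2, p3, p4⟩ := (memT t x y).1 ⟨⟨h1.1.le, h1.2⟩, h2.1.le, h2.2⟩
    obtain ⟨q1, q2, q3, q4⟩ := (memT u x y).1 ⟨⟨g1.1.le, g1.2⟩, g2.1.le, g2.2⟩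
    exact htu (hdisj t u _ _ p1 p2 p3 p4 q1 q2 q3 q4)
  -- The closed sets are the closures of the half-open ones.
  · have := congrArg closure union
    rw [closure_iUnion_of_finite, closure_iUnion_of_finite] at this
    simp only [closure_prod_eq, closure_Ico (hposR _).1.ne, closure_Ico (hposR _).2.ne,
      closure_Ico (lt_add_of_pos_right _ (hs _)).ne] at this
    exact this
  · intro t
    obtain ⟨i, h1, h2, h3, h4⟩ := hsub t
    refine ⟨i, Set.prod_mono (Set.Icc_subset_Icc ?_ ?_) (Set.Icc_subset_Icc ?_ ?_)⟩
    · rwa [hρ _ (va i), (hA t).2]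
    · rwa [hρ _ (hA' t).1, (hA' t).2]
    · rwa [hσ _ (wb i), (hB t).2]
    · rwa [hσ _ (hB' t).1, (hB' t).2]

end SquareUnion

theorem stmt17 (n : ℕ) (hn : 1 ≤ n)
    (a b s : Fin n → ℝ) (hs : ∀ i, 0 < s i) :
    ∃ (m : ℕ) (A A' B B' : Fin m → ℝ),
      m ≤ 9 * n ∧
      (∀ j, A j < A' j ∧ B j < B' j) ∧
      (∀ j k, j ≠ k →
        Disjoint (rectInterior (A j) (A' j) (B j) (B' j))
          (rectInterior (A k) (A' k) (B k) (B' k))) ∧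
      (⋃ j, rectSet (A j) (A' j) (B j) (B' j)) = (⋃ i, squareSet (a i) (b i) (s i)) ∧
      (∀ j, ∃ i, rectSet (A j) (A' j) (B j) (B' j) ⊆ squareSet (a i) (b i) (s i)) := by
  set τ := Tuple.sort fun i => - s i
  obtain ⟨T, fT, A, A', B, B', hcard, hpos, hdisj, hun, hsub⟩ :=
    SquareUnion.sorted (a ∘ τ) (b ∘ τ) (s ∘ τ) (fun i => hs _) fun j k hjk => by
      have := Tuple.monotone_sort (fun i => - s i) hjk.le
      simp only [Function.comp_apply] at this ⊢
      exact neg_le_neg_iff.1 this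
  let e := (Fintype.equivFin T).symm
  refine ⟨Fintype.card T, A ∘ e, A' ∘ e, B ∘ e, B' ∘ e, hcard, fun j => hpos _,
    fun j k hjk => hdisj _ _ (e.injective.ne hjk), ?_, fun j => ?_⟩
  · refine (e.surjective.iUnion_comp fun t => rectSet (A t) (A' t) (B t) (B' t)).trans
      (hun.trans ?_)
    exact τ.surjective.iUnion_comp fun i => squareSet (a i) (b i) (s i)
  · obtain ⟨i, hi⟩ := hsub (e j)
    exact ⟨τ i, hi⟩
end

section
/- Let P ⊆ ℝ be a finite set with |P| ≥ 2 (with the metric dist(x,y) = |x−y|) and let ε ∈ (0,1). Let opt be the minimum size of a (1/ε)-WSPD of P. Then there exists a partition (1/ε)-WSPD of P (a (1/ε)-WSPD in which every unordered pair of distinct points of P is covered by exactly one pair of the decomposition) of size at most 10 · opt. -/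
/-!
On the line, the two sides of a well-separated pair lie in disjoint intervals. If `p < q` are the
facing extreme points of the two sides and `g = q - p`, the pair only covers points `(x, y)` of the
square `[p - ε g, p] × [q, q + ε g]`, and conversely everything inside this square is
well-separated. So an optimal WSPD amounts to a set `C` of at most `opt` corners `(p, q)` whose
squares cover all `(x, y)` with `x < y` in `P`.

Assign `(x, y)` to the square covering it whose left end is smallest (ties broken by `p`). In every
row `y` this cuts out a set of columns `slice K y` for each square `K`, and grouping the rows of `K`
having the same nonempty slice gives a partition WSPD. Its size is the number of pairs `(K, y)`
where `y` is the lowest row having its slice (`IsStart`). Such a row is either the bottom row of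
`K`, or the slice of `K` has changed since the preceding row because a square `N` begins at `y` or a
square `M` has ended just before `y`. Each square `N`, resp. `M`, is responsible for at most one
pair `(K, y)`: this uses that squares are anchored to the diagonal, so that a square whose
horizontal extent is contained in that of another one ends no later. Hence the size is at most
`3 * opt`.
-/

/-- `dmin A B` is the minimum distance between the nonempty finite sets `A` and `B`. -/
noncomputable def dmin {X : Type*} [MetricSpace X] (A B : Finset X) : ℝ :=
  sInf {r : ℝ | ∃ a ∈ A, ∃ b ∈ B, r = dist a b}

/-- The diameter of a nonempty finite set. -/
noncomputable def fdiam {X : Type*} [MetricSpace X] (A : Finset X) : ℝ :=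
  sSup {r : ℝ | ∃ x ∈ A, ∃ y ∈ A, r = dist x y}

/-- A pair `{A, B}` is `(1/ε)`-well-separated if `max(diam A, diam B) ≤ ε · d(A,B)`. -/
def IsWellSeparated {X : Type*} [MetricSpace X] (ε : ℝ) (A B : Finset X) : Prop :=
  max (fdiam A) (fdiam B) ≤ ε * dmin A B

/-- `W` is a pair decomposition of the finite set `P`. -/
def PairDecomp {X : Type*} (P : Finset X) (W : Finset (Finset X × Finset X)) : Prop :=
  (∀ pr ∈ W, pr.1 ⊆ P ∧ pr.2 ⊆ P ∧ pr.1.Nonempty ∧ pr.2.Nonempty ∧ Disjoint pr.1 pr.2) ∧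
  ∀ x ∈ P, ∀ y ∈ P, x ≠ y →
    ∃ pr ∈ W, (x ∈ pr.1 ∧ y ∈ pr.2) ∨ (x ∈ pr.2 ∧ y ∈ pr.1)

/-- `W` is a `(1/ε)`-WSPD of `P`. -/
def IsWSPD {X : Type*} [MetricSpace X] (ε : ℝ) (P : Finset X)
    (W : Finset (Finset X × Finset X)) : Prop :=
  PairDecomp P W ∧ ∀ pr ∈ W, IsWellSeparated ε pr.1 pr.2

/-! ### Slices of a family of squares -/

/-- The square with lower right corner `c`, of side `ε` times the gap `c.2 - c.1`, covers `(x, y)`. -/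
def Cov (ε : ℝ) (c : ℝ × ℝ) (x y : ℝ) : Prop :=
  c.1 - ε * (c.2 - c.1) ≤ x ∧ x ≤ c.1 ∧ c.2 ≤ y ∧ y ≤ c.2 + ε * (c.2 - c.1)

/-- Priority of a square (smaller is stronger): its left end, with ties broken by its right end. -/
def key (ε : ℝ) (c : ℝ × ℝ) : ℝ ×ₗ ℝ := toLex (c.1 - ε * (c.2 - c.1), c.1)

open Classical in
/-- The columns `x` for which `K` is the square of highest priority covering `(x, y)`. -/
noncomputable def slice (P : Finset ℝ) (C : Finset (ℝ × ℝ)) (ε : ℝ) (K : ℝ × ℝ) (y : ℝ) :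
    Finset ℝ :=
  P.filter fun x => Cov ε K x y ∧ ∀ N ∈ C, key ε N < key ε K → ¬ Cov ε N x y

/-- The pair formed by the slice of `K` in row `y` and all rows in which `K` has this slice. -/
noncomputable def rect (P : Finset ℝ) (C : Finset (ℝ × ℝ)) (ε : ℝ) (K : ℝ × ℝ) (y : ℝ) :
    Finset ℝ × Finset ℝ :=
  (slice P C ε K y, P.filter fun z => slice P C ε K z = slice P C ε K y)

/-- `y` is the lowest row in which `K` has its slice of row `y`, and this slice is nonempty. -/
def IsStart (P : Finset ℝ) (C : Finset (ℝ × ℝ)) (ε : ℝ) (K : ℝ × ℝ) (y : ℝ) : Prop :=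
  (slice P C ε K y).Nonempty ∧ ∀ z ∈ P, z < y → slice P C ε K z ≠ slice P C ε K y

/-- `z` is the element of `P` immediately preceding `y`. -/
def IsPred (P : Finset ℝ) (z y : ℝ) : Prop :=
  z ∈ P ∧ z < y ∧ ∀ w ∈ P, w < y → w ≤ z

lemma mem_slice {P : Finset ℝ} {C : Finset (ℝ × ℝ)} {ε : ℝ} {K : ℝ × ℝ} {x y : ℝ} :
    x ∈ slice P C ε K y ↔
      x ∈ P ∧ Cov ε K x y ∧ ∀ N ∈ C, key ε N < key ε K → ¬ Cov ε N x y := by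
  simp [slice]

lemma left_le_of_key_lt {ε : ℝ} {N K : ℝ × ℝ} (h : key ε N < key ε K) :
    N.1 - ε * (N.2 - N.1) ≤ K.1 - ε * (K.2 - K.1) := by
  rcases Prod.Lex.toLex_lt_toLex.1 h with h | h
  · exact h.le
  · exact h.1.le

lemma key_injective {ε : ℝ} (hε : 0 < ε) : Function.Injective (key ε) := by
  rintro ⟨a, b⟩ ⟨c, d⟩ h
  have h := toLex.injective h
  simp only [Prod.mk.injEq] at h
  obtain ⟨h1, rfl⟩ := h
  have : ε * (b - a) = ε * (d - a) := by linarith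
  have := mul_left_cancel₀ hε.ne' this
  exact Prod.ext rfl (by simp only; linarith)

/-- A square with nonempty slice in row `y` owns its rightmost column there: a stronger square
covering that column would cover the whole slice. -/
lemma right_mem_slice {P : Finset ℝ} {C : Finset (ℝ × ℝ)} {ε : ℝ} {K : ℝ × ℝ} {y : ℝ}
    (hK : K.1 ∈ P) (h : (slice P C ε K y).Nonempty) : K.1 ∈ slice P C ε K y := by
  obtain ⟨x, hx⟩ := h
  obtain ⟨-, hc, ht⟩ := mem_slice.1 hx
  refine mem_slice.2 ⟨hK, ⟨by linarith [hc.1, hc.2.1], le_rfl, hc.2.2⟩, fun N hN hlt hcov => ?_⟩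
  have := left_le_of_key_lt hlt
  exact ht N hN hlt ⟨this.trans hc.1, hc.2.1.trans hcov.2.1, hcov.2.2⟩

/-- If the horizontal extent of `K` is contained in that of `N`, then the top row of `K` is at most
that of `N`. -/
lemma top_le_of_dominated {ε : ℝ} (hε : 0 < ε) {N K : ℝ × ℝ} (h : key ε N < key ε K)
    (hp : K.1 ≤ N.1) : K.2 + ε * (K.2 - K.1) ≤ N.2 + ε * (N.2 - N.1) := by
  have h1 := left_le_of_key_lt h
  have h2 : K.2 - K.1 ≤ N.2 - N.1 := by
    have : ε * (K.2 - K.1) ≤ ε * (N.2 - N.1) := by linarith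
    exact le_of_mul_le_mul_left this hε
  have : ε * (K.2 - K.1) ≤ ε * (N.2 - N.1) := mul_le_mul_of_nonneg_left h2 hε.le
  linarith

/-! ### Counting the starts -/

/-- The slice of `K` loses a column on passing to row `y`, because of `N` beginning at `y`. -/
def StartByBirth (P : Finset ℝ) (C : Finset (ℝ × ℝ)) (ε : ℝ) (K : ℝ × ℝ) (y : ℝ)
    (N : ℝ × ℝ) : Prop :=
  N.2 = y ∧ key ε N < key ε K ∧ ∃ z, IsPred P z y ∧ K.2 ≤ z ∧
    ∃ x ∈ slice P C ε K z, Cov ε N x y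

/-- The slice of `K` gains a column on passing to row `y`, because of `M` ending just before `y`. -/
def StartByDeath (P : Finset ℝ) (C : Finset (ℝ × ℝ)) (ε : ℝ) (K : ℝ × ℝ) (y : ℝ)
    (M : ℝ × ℝ) : Prop :=
  M.2 + ε * (M.2 - M.1) < y ∧ key ε M < key ε K ∧ ∃ z, IsPred P z y ∧
    ∃ x ∈ slice P C ε K y, Cov ε M x z

/-- A start either is the bottom row of its square or is caused by another square. -/
lemma start_cases {P : Finset ℝ} {C : Finset (ℝ × ℝ)} {ε : ℝ}
    (hC : ∀ c ∈ C, c.1 ∈ P ∧ c.2 ∈ P ∧ c.1 < c.2) {K : ℝ × ℝ} {y : ℝ} (hK : K ∈ C)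
    (h : IsStart P C ε K y) :
    K.2 = y ∨ (∃ N ∈ C, StartByBirth P C ε K y N) ∨ ∃ M ∈ C, StartByDeath P C ε K y M := by
  obtain ⟨hne, hmin⟩ := h
  obtain ⟨x0, hx0⟩ := hne
  obtain ⟨-, hc0, -⟩ := mem_slice.1 hx0
  rcases hc0.2.2.1.eq_or_lt with h | hlt
  · exact Or.inl h
  right
  obtain ⟨z, hz, hzmax⟩ := Finset.exists_max_image (P.filter (· < y)) id
    ⟨K.2, Finset.mem_filter.2 ⟨(hC K hK).2.1, hlt⟩⟩
  simp only [Finset.mem_filter, id] at hz hzmax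
  have hpred : IsPred P z y := ⟨hz.1, hz.2, fun w hw hwy => hzmax w ⟨hw, hwy⟩⟩
  have hKz : K.2 ≤ z := hzmax _ ⟨(hC K hK).2.1, hlt⟩
  have hneq := hmin z hz.1 hz.2
  have hex : ∃ x, ¬ (x ∈ slice P C ε K z ↔ x ∈ slice P C ε K y) := by
    by_contra! hcon
    exact hneq (Finset.ext hcon)
  obtain ⟨x, hx⟩ := hex
  by_cases hxz : x ∈ slice P C ε K z
  · left
    have hxy : x ∉ slice P C ε K y := fun h => hx ⟨fun _ => h, fun _ => hxz⟩
    obtain ⟨hxP, hcz, htz⟩ := mem_slice.1 hxz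
    have hcy : Cov ε K x y := ⟨hcz.1, hcz.2.1, hlt.le, hc0.2.2.2⟩
    have : ∃ N ∈ C, key ε N < key ε K ∧ Cov ε N x y := by
      by_contra! hcon
      exact hxy (mem_slice.2 ⟨hxP, hcy, hcon⟩)
    obtain ⟨N, hN, hNK, hNc⟩ := this
    refine ⟨N, hN, ?_, hNK, z, hpred, hKz, x, hxz, hNc⟩
    by_contra hne
    have hNy : N.2 < y := lt_of_le_of_ne hNc.2.2.1 hne
    exact htz N hN hNK ⟨hNc.1, hNc.2.1, hzmax _ ⟨(hC N hN).2.1, hNy⟩, hz.2.le.trans hNc.2.2.2⟩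
  · right
    have hxy : x ∈ slice P C ε K y := by
      by_contra h
      exact hx ⟨fun h' => absurd h' hxz, fun h' => absurd h' h⟩
    obtain ⟨hxP, hcy, hty⟩ := mem_slice.1 hxy
    have hcz : Cov ε K x z := ⟨hcy.1, hcy.2.1, hKz, hz.2.le.trans hcy.2.2.2⟩
    have : ∃ M ∈ C, key ε M < key ε K ∧ Cov ε M x z := by
      by_contra! hcon
      exact hxz (mem_slice.2 ⟨hxP, hcz, hcon⟩)
    obtain ⟨M, hM, hMK, hMc⟩ := this
    refine ⟨M, hM, ?_, hMK, z, hpred, x, hxy, hMc⟩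
    by_contra! hge
    exact hty M hM hMK ⟨hMc.1, hMc.2.1, hMc.2.2.1.trans hz.2.le, hge⟩

/-- A square `N` beginning at row `y` causes a start for at most one square in that row. -/
lemma birth_not_lt {P : Finset ℝ} {C : Finset (ℝ × ℝ)} {ε : ℝ}
    (hC : ∀ c ∈ C, c.1 ∈ P ∧ c.2 ∈ P ∧ c.1 < c.2) {K K' N : ℝ × ℝ} {y : ℝ}
    (hK : K ∈ C) (hN : N ∈ C) (hs : IsStart P C ε K y)
    (hb : StartByBirth P C ε K y N) (hb' : StartByBirth P C ε K' y N) :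
    ¬ key ε K < key ε K' := by
  intro hlt
  obtain ⟨-, hNK, z, hz, hKz, -⟩ := hb
  obtain ⟨-, -, z', hz', -, x, hx, hNx⟩ := hb'
  obtain rfl : z = z' := le_antisymm (hz'.2.2 _ hz.1 hz.2.1) (hz.2.2 _ hz'.1 hz'.2.1)
  have hr := (mem_slice.1 (right_mem_slice (hC K hK).1 hs.1)).2
  obtain ⟨-, hc, ht⟩ := mem_slice.1 hx
  have hKL := left_le_of_key_lt hlt
  have hNL := left_le_of_key_lt hNK
  rcases le_total N.1 K.1 with h | h
  · -- `K` is present in row `z` already, so it hides `x` from `K'` there.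
    exact ht K hK hlt ⟨hKL.trans hc.1, hNx.2.1.trans h, hKz, hz.2.1.le.trans hr.1.2.2.2⟩
  · -- `N` hides all of `K` in row `y`.
    exact hr.2 N hN hNK ⟨hNL.trans hr.1.1, h, hNx.2.2⟩

/-- A square `M` causes, by ending, a start for at most one square in a given row. -/
lemma death_not_lt {P : Finset ℝ} {C : Finset (ℝ × ℝ)} {ε : ℝ} (hε : 0 < ε)
    {K K' M : ℝ × ℝ} {y : ℝ} (hK : K ∈ C) (hs : IsStart P C ε K y)
    (hb : StartByDeath P C ε K y M) (hb' : StartByDeath P C ε K' y M) :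
    ¬ key ε K < key ε K' := by
  intro hlt
  obtain ⟨hMy, hMK, -⟩ := hb
  obtain ⟨-, -, z', hz', x, hx, hMx⟩ := hb'
  obtain ⟨x0, hx0⟩ := hs.1
  obtain ⟨-, hc0, -⟩ := mem_slice.1 hx0
  obtain ⟨-, hc, ht⟩ := mem_slice.1 hx
  have hKL := left_le_of_key_lt hlt
  rcases le_total M.1 K.1 with h | h
  · -- `K` hides `x` from `K'` in row `y`.
    exact ht K hK hlt ⟨hKL.trans hc.1, hMx.2.1.trans h, hc0.2.2⟩
  · -- `K` is dominated by `M`, hence has ended before row `y`.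
    linarith [top_le_of_dominated hε hMK h, hc0.2.2.2]

lemma death_row_unique {P : Finset ℝ} {C : Finset (ℝ × ℝ)} {ε : ℝ} {K K' M : ℝ × ℝ} {y y' : ℝ}
    (hy : y ∈ P) (hb : StartByDeath P C ε K y M) (hb' : StartByDeath P C ε K' y' M) :
    ¬ y < y' := by
  intro hlt
  obtain ⟨hMy, -, -⟩ := hb
  obtain ⟨-, -, z', hz', x, -, hMx⟩ := hb'
  linarith [hz'.2.2 y hy hlt, hMx.2.2.2]

open Classical in
lemma card_starts_le {P : Finset ℝ} {C : Finset (ℝ × ℝ)} {ε : ℝ} (hε : 0 < ε)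
    (hC : ∀ c ∈ C, c.1 ∈ P ∧ c.2 ∈ P ∧ c.1 < c.2) :
    ((C ×ˢ P).filter fun t => IsStart P C ε t.1 t.2).card ≤ 3 * C.card := by
  set T := (C ×ˢ P).filter fun t => IsStart P C ε t.1 t.2 with hT
  have hmem : ∀ t ∈ T, t.1 ∈ C ∧ t.2 ∈ P ∧ IsStart P C ε t.1 t.2 := by
    intro t ht
    simpa [hT, and_assoc] using ht
  have hA : (T.filter fun t => t.1.2 = t.2).card ≤ C.card := by
    refine Finset.card_le_card_of_injOn Prod.fst (fun t ht => ?_) ?_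
    · exact (hmem t (Finset.mem_filter.1 ht).1).1
    · intro t ht t' ht' h
      have h1 := (Finset.mem_filter.1 ht).2
      have h2 := (Finset.mem_filter.1 ht').2
      exact Prod.ext h (by rw [← h1, ← h2, h])
  have hB : (T.filter fun t => ∃ N ∈ C, StartByBirth P C ε t.1 t.2 N).card ≤ C.card := by
    refine Finset.card_le_card_of_forall_subsingleton
      (fun t N => StartByBirth P C ε t.1 t.2 N) (fun t ht => (Finset.mem_filter.1 ht).2) ?_
    rintro N hN ⟨K, y⟩ ⟨ht, hb⟩ ⟨K', y'⟩ ⟨ht', hb'⟩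
    obtain ⟨hK, -, hs⟩ := hmem _ (Finset.mem_filter.1 ht).1
    obtain ⟨hK', -, hs'⟩ := hmem _ (Finset.mem_filter.1 ht').1
    obtain rfl : y = y' := hb.1.symm.trans hb'.1
    have := key_injective hε (le_antisymm
      (not_lt.1 (birth_not_lt hC hK' hN hs' hb' hb)) (not_lt.1 (birth_not_lt hC hK hN hs hb hb')))
    exact Prod.ext this rfl
  have hD : (T.filter fun t => ∃ M ∈ C, StartByDeath P C ε t.1 t.2 M).card ≤ C.card := by
    refine Finset.card_le_card_of_forall_subsingleton
      (fun t M => StartByDeath P C ε t.1 t.2 M) (fun t ht => (Finset.mem_filter.1 ht).2) ?_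
    rintro M hM ⟨K, y⟩ ⟨ht, hb⟩ ⟨K', y'⟩ ⟨ht', hb'⟩
    obtain ⟨hK, hy, hs⟩ := hmem _ (Finset.mem_filter.1 ht).1
    obtain ⟨hK', hy', hs'⟩ := hmem _ (Finset.mem_filter.1 ht').1
    obtain rfl : y = y' := le_antisymm
      (not_lt.1 (death_row_unique hy' hb' hb)) (not_lt.1 (death_row_unique hy hb hb'))
    have := key_injective hε (le_antisymm
      (not_lt.1 (death_not_lt hε hK' hs' hb' hb)) (not_lt.1 (death_not_lt hε hK hs hb hb')))
    exact Prod.ext this rfl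
  have hsub : T ⊆ (T.filter fun t => t.1.2 = t.2) ∪
      ((T.filter fun t => ∃ N ∈ C, StartByBirth P C ε t.1 t.2 N) ∪
        (T.filter fun t => ∃ M ∈ C, StartByDeath P C ε t.1 t.2 M)) := by
    intro t ht
    have := start_cases hC (hmem t ht).1 (hmem t ht).2.2
    simp only [Finset.mem_union, Finset.mem_filter]
    exact this.imp (⟨ht, ·⟩) (Or.imp (⟨ht, ·⟩) (⟨ht, ·⟩))
  have h1 := Finset.card_le_card hsub
  have h2 := Finset.card_union_le (T.filter fun t => t.1.2 = t.2)
      ((T.filter fun t => ∃ N ∈ C, StartByBirth P C ε t.1 t.2 N) ∪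
        (T.filter fun t => ∃ M ∈ C, StartByDeath P C ε t.1 t.2 M))
  have h3 := Finset.card_union_le (T.filter fun t => ∃ N ∈ C, StartByBirth P C ε t.1 t.2 N)
        (T.filter fun t => ∃ M ∈ C, StartByDeath P C ε t.1 t.2 M)
  omega

/-! ### Well-separated pairs on the line and their corners -/

lemma dmin_le {A B : Finset ℝ} {a b : ℝ} (ha : a ∈ A) (hb : b ∈ B) : dmin A B ≤ |a - b| := by
  refine csInf_le ⟨0, ?_⟩ ⟨a, ha, b, hb, (Real.dist_eq a b).symm⟩
  rintro r ⟨_, _, _, _, rfl⟩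
  exact dist_nonneg

lemma le_fdiam {A : Finset ℝ} {a b : ℝ} (ha : a ∈ A) (hb : b ∈ A) : |a - b| ≤ fdiam A := by
  refine le_csSup ?_ ⟨a, ha, b, hb, (Real.dist_eq a b).symm⟩
  refine ((A ×ˢ A).image fun t => dist t.1 t.2).bddAbove.mono ?_
  rintro r ⟨x, hx, y, hy, rfl⟩
  simp only [Finset.coe_image, Set.mem_image, Finset.mem_coe, Finset.mem_product]
  exact ⟨(x, y), ⟨hx, hy⟩, rfl⟩

lemma wellSeparated_of {ε g l p q r : ℝ} (hε : 0 < ε) {A B : Finset ℝ} (hA : A.Nonempty)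
    (hB : B.Nonempty) (hAi : ∀ x ∈ A, l ≤ x ∧ x ≤ p) (hBi : ∀ y ∈ B, q ≤ y ∧ y ≤ r)
    (hg : g = q - p) (hl : p - l ≤ ε * g) (hr : r - q ≤ ε * g) :
    IsWellSeparated ε A B := by
  obtain ⟨a, ha⟩ := hA
  obtain ⟨b, hb⟩ := hB
  have hd : g ≤ dmin A B := by
    refine le_csInf ⟨_, a, ha, b, hb, rfl⟩ ?_
    rintro _ ⟨x, hx, y, hy, rfl⟩
    rw [Real.dist_eq, abs_sub_comm]
    linarith [le_abs_self (y - x), (hAi x hx).2, (hBi y hy).1]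
  have hd' : ε * g ≤ ε * dmin A B := mul_le_mul_of_nonneg_left hd hε.le
  refine max_le ?_ ?_
  · refine csSup_le ⟨_, a, ha, a, ha, rfl⟩ ?_
    rintro _ ⟨x, hx, y, hy, rfl⟩
    rw [Real.dist_eq, abs_le]
    constructor <;> linarith [hAi x hx, hAi y hy]
  · refine csSup_le ⟨_, b, hb, b, hb, rfl⟩ ?_
    rintro _ ⟨x, hx, y, hy, rfl⟩
    rw [Real.dist_eq, abs_le]
    constructor <;> linarith [hBi x hx, hBi y hy]

lemma IsWellSeparated.swap {ε : ℝ} {A B : Finset ℝ} (h : IsWellSeparated ε A B) :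
    IsWellSeparated ε B A := by
  have : dmin B A = dmin A B := by
    unfold dmin
    congr 1
    ext r
    constructor <;> rintro ⟨a, ha, b, hb, rfl⟩ <;> exact ⟨b, hb, a, ha, dist_comm _ _⟩
  unfold IsWellSeparated at *
  rw [this, max_comm]
  exact h

/-- If one point of `A` lies to the left of one point of `B`, then `A` lies to the left of `B`. -/
lemma sep_lt {ε : ℝ} (hε0 : 0 < ε) (hε1 : ε < 1) {A B : Finset ℝ} (hd : Disjoint A B)
    (h : IsWellSeparated ε A B) {a₀ b₀ a b : ℝ} (ha₀ : a₀ ∈ A) (hb₀ : b₀ ∈ B) (ha : a ∈ A)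
    (hb : b ∈ B) (h0 : a₀ < b₀) : a < b := by
  have hne : ∀ x ∈ A, ∀ y ∈ B, x ≠ y := fun x hx y hy => Finset.disjoint_iff_ne.1 hd x hx y hy
  by_contra! hba
  have hba : b < a := lt_of_le_of_ne hba (hne a ha b hb).symm
  have hab : dmin A B ≤ a - b := by
    have := dmin_le ha hb
    rwa [abs_of_pos (by linarith)] at this
  have h1 := (max_le_iff.1 h)
  have h2 : ε * dmin A B ≤ ε * (a - b) := mul_le_mul_of_nonneg_left hab hε0.le
  have h3 : ε * (a - b) < a - b := by nlinarith
  rcases lt_or_gt_of_ne (hne a₀ ha₀ b hb) with h4 | h4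
  · linarith [le_fdiam ha ha₀, le_abs_self (a - a₀)]
  · have h5 : dmin A B ≤ b₀ - a₀ := by
      have := dmin_le ha₀ hb₀
      rwa [abs_sub_comm, abs_of_pos (by linarith)] at this
    have h6 : ε * dmin A B ≤ ε * (b₀ - a₀) := mul_le_mul_of_nonneg_left h5 hε0.le
    have h7 : ε * (b₀ - a₀) < b₀ - a₀ := by nlinarith
    linarith [le_fdiam hb₀ hb, le_abs_self (b₀ - b)]

lemma exists_corner_aux {ε : ℝ} (hε0 : 0 < ε) (hε1 : ε < 1) {A B : Finset ℝ} (hd : Disjoint A B)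
    (h : IsWellSeparated ε A B) {a₀ b₀ : ℝ} (ha₀ : a₀ ∈ A) (hb₀ : b₀ ∈ B) (h0 : a₀ < b₀) :
    ∃ c : ℝ × ℝ, c.1 ∈ A ∧ c.2 ∈ B ∧ c.1 < c.2 ∧ ∀ x y, x < y →
      ((x ∈ A ∧ y ∈ B) ∨ (x ∈ B ∧ y ∈ A)) → Cov ε c x y := by
  have hlt : ∀ a ∈ A, ∀ b ∈ B, a < b := fun a ha b hb => sep_lt hε0 hε1 hd h ha₀ hb₀ ha hb h0
  obtain ⟨p, hp, hpm⟩ := Finset.exists_max_image A id ⟨a₀, ha₀⟩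
  obtain ⟨q, hq, hqm⟩ := Finset.exists_min_image B id ⟨b₀, hb₀⟩
  simp only [id] at hpm hqm
  refine ⟨(p, q), hp, hq, hlt p hp q hq, fun x y hxy hc => ?_⟩
  rcases hc with ⟨hx, hy⟩ | ⟨hx, hy⟩
  · have h1 := (max_le_iff.1 h)
    have h2 : dmin A B ≤ q - p := by
      have := dmin_le hp hq
      rwa [abs_sub_comm, abs_of_pos (by linarith [hlt p hp q hq])] at this
    have h3 : ε * dmin A B ≤ ε * (q - p) := mul_le_mul_of_nonneg_left h2 hε0.le
    refine ⟨?_, hpm x hx, hqm y hy, ?_⟩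
    · simp only
      linarith [le_fdiam hp hx, le_abs_self (p - x)]
    · simp only
      linarith [le_fdiam hy hq, le_abs_self (y - q)]
  · exact absurd (hlt y hy x hx) (by linarith)

/-- Every well-separated pair is contained in the square of some corner. -/
lemma exists_corner {ε : ℝ} (hε0 : 0 < ε) (hε1 : ε < 1) {P A B : Finset ℝ} (hA : A ⊆ P)
    (hB : B ⊆ P) (hAn : A.Nonempty) (hBn : B.Nonempty) (hd : Disjoint A B)
    (h : IsWellSeparated ε A B) :
    ∃ c : ℝ × ℝ, (c.1 ∈ P ∧ c.2 ∈ P ∧ c.1 < c.2) ∧ ∀ x y, x < y →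
      ((x ∈ A ∧ y ∈ B) ∨ (x ∈ B ∧ y ∈ A)) → Cov ε c x y := by
  obtain ⟨a, ha⟩ := hAn
  obtain ⟨b, hb⟩ := hBn
  rcases lt_or_gt_of_ne (Finset.disjoint_iff_ne.1 hd a ha b hb) with hab | hab
  · obtain ⟨c, h1, h2, h3, h4⟩ := exists_corner_aux hε0 hε1 hd h ha hb hab
    exact ⟨c, ⟨hA h1, hB h2, h3⟩, h4⟩
  · obtain ⟨c, h1, h2, h3, h4⟩ := exists_corner_aux hε0 hε1 hd.symm h.swap hb ha hab
    exact ⟨c, ⟨hB h1, hA h2, h3⟩, fun x y hxy hc => h4 x y hxy hc.symm⟩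

lemma exists_corners {ε : ℝ} (hε0 : 0 < ε) (hε1 : ε < 1) {P : Finset ℝ}
    {W : Finset (Finset ℝ × Finset ℝ)} (hW : IsWSPD ε P W) :
    ∃ C : Finset (ℝ × ℝ), C.card ≤ W.card ∧ (∀ c ∈ C, c.1 ∈ P ∧ c.2 ∈ P ∧ c.1 < c.2) ∧
      ∀ x ∈ P, ∀ y ∈ P, x < y → ∃ c ∈ C, Cov ε c x y := by
  classical
  obtain ⟨⟨hW1, hW2⟩, hW3⟩ := hW
  have hex : ∀ pr : Finset ℝ × Finset ℝ, ∃ c : ℝ × ℝ, pr ∈ W →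
      (c.1 ∈ P ∧ c.2 ∈ P ∧ c.1 < c.2) ∧ ∀ x y, x < y →
        ((x ∈ pr.1 ∧ y ∈ pr.2) ∨ (x ∈ pr.2 ∧ y ∈ pr.1)) → Cov ε c x y := by
    intro pr
    by_cases hpr : pr ∈ W
    · obtain ⟨h1, h2, h3, h4, h5⟩ := hW1 pr hpr
      obtain ⟨c, hc⟩ := exists_corner hε0 hε1 h1 h2 h3 h4 h5 (hW3 pr hpr)
      exact ⟨c, fun _ => hc⟩
    · exact ⟨(0, 0), fun h => absurd h hpr⟩
  choose f hf using hex
  refine ⟨W.image f, Finset.card_image_le, ?_, ?_⟩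
  · intro c hc
    obtain ⟨pr, hpr, rfl⟩ := Finset.mem_image.1 hc
    exact (hf pr hpr).1
  · intro x hx y hy hxy
    obtain ⟨pr, hpr, h⟩ := hW2 x hx y hy hxy.ne
    exact ⟨f pr, Finset.mem_image_of_mem f hpr, (hf pr hpr).2 x y hxy h⟩

/-! ### The partition into rectangles -/

lemma rect_bounds {P : Finset ℝ} {C : Finset (ℝ × ℝ)} {ε : ℝ} {K : ℝ × ℝ} {y : ℝ}
    (hs : IsStart P C ε K y) :
    (∀ x ∈ (rect P C ε K y).1, K.1 - ε * (K.2 - K.1) ≤ x ∧ x ≤ K.1) ∧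
      ∀ z ∈ (rect P C ε K y).2, K.2 ≤ z ∧ z ≤ K.2 + ε * (K.2 - K.1) := by
  constructor
  · intro x hx
    obtain ⟨-, hc, -⟩ := mem_slice.1 hx
    exact ⟨hc.1, hc.2.1⟩
  · intro z hz
    obtain ⟨x, hx⟩ := hs.1
    rw [← (Finset.mem_filter.1 hz).2] at hx
    obtain ⟨-, hc, -⟩ := mem_slice.1 hx
    exact hc.2.2

lemma exists_slice {P : Finset ℝ} {C : Finset (ℝ × ℝ)} {ε : ℝ} {x y : ℝ} (hx : x ∈ P)
    (h : ∃ c ∈ C, Cov ε c x y) : ∃ K ∈ C, x ∈ slice P C ε K y := by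
  classical
  obtain ⟨c, hc, hcov⟩ := h
  obtain ⟨K, hK, hmin⟩ := Finset.exists_min_image (C.filter fun c => Cov ε c x y) (key ε)
    ⟨c, Finset.mem_filter.2 ⟨hc, hcov⟩⟩
  rw [Finset.mem_filter] at hK
  refine ⟨K, hK.1, mem_slice.2 ⟨hx, hK.2, fun N hN hlt hNc => ?_⟩⟩
  exact absurd (hmin N (Finset.mem_filter.2 ⟨hN, hNc⟩)) (not_le.2 hlt)

lemma slice_unique {P : Finset ℝ} {C : Finset (ℝ × ℝ)} {ε : ℝ} (hε : 0 < ε) {K K' : ℝ × ℝ}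
    {x y : ℝ} (hK : K ∈ C) (hK' : K' ∈ C) (h : x ∈ slice P C ε K y)
    (h' : x ∈ slice P C ε K' y) : K = K' := by
  obtain ⟨-, h1, h2⟩ := mem_slice.1 h
  obtain ⟨-, h1', h2'⟩ := mem_slice.1 h'
  exact key_injective hε (le_antisymm (not_lt.1 fun hlt => h2 K' hK' hlt h1')
    (not_lt.1 fun hlt => h2' K hK hlt h1))

lemma exists_start {P : Finset ℝ} {C : Finset (ℝ × ℝ)} {ε : ℝ} {K : ℝ × ℝ} {x y : ℝ}
    (hy : y ∈ P) (h : x ∈ slice P C ε K y) :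
    ∃ z ∈ P, IsStart P C ε K z ∧ slice P C ε K z = slice P C ε K y := by
  obtain ⟨z, hz, hmin⟩ := Finset.exists_min_image
    (P.filter fun z => slice P C ε K z = slice P C ε K y) id ⟨y, Finset.mem_filter.2 ⟨hy, rfl⟩⟩
  rw [Finset.mem_filter] at hz
  refine ⟨z, hz.1, ⟨⟨x, by rwa [hz.2]⟩, fun w hw hwz heq => ?_⟩, hz.2⟩
  exact absurd (hmin w (Finset.mem_filter.2 ⟨hw, heq.trans hz.2⟩)) (not_le.2 hwz)

theorem stmt18 (P : Finset ℝ) (hP : 2 ≤ P.card) (ε : ℝ) (hε0 : 0 < ε) (hε1 : ε < 1)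
    (opt : ℕ)
    (hopt_ex : ∃ W : Finset (Finset ℝ × Finset ℝ), IsWSPD ε P W ∧ W.card = opt)
    (hopt_min : ∀ W : Finset (Finset ℝ × Finset ℝ), IsWSPD ε P W → opt ≤ W.card) :
    ∃ W : Finset (Finset ℝ × Finset ℝ),
      IsWSPD ε P W ∧
      (∀ x ∈ P, ∀ y ∈ P, x ≠ y →
        ∃! pr, pr ∈ W ∧ ((x ∈ pr.1 ∧ y ∈ pr.2) ∨ (x ∈ pr.2 ∧ y ∈ pr.1))) ∧
      W.card ≤ 10 * opt := by
  classical
  obtain ⟨W₀, hW₀, rfl⟩ := hopt_ex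
  obtain ⟨C, hCcard, hC, hcov⟩ := exists_corners hε0 hε1 hW₀
  set T := (C ×ˢ P).filter fun t => IsStart P C ε t.1 t.2 with hT
  set W := T.image fun t => rect P C ε t.1 t.2 with hWdef
  have hmemW : ∀ pr, pr ∈ W ↔
      ∃ K ∈ C, ∃ y ∈ P, IsStart P C ε K y ∧ rect P C ε K y = pr := by
    intro pr
    simp only [hWdef, hT, Finset.mem_image, Finset.mem_filter, Finset.mem_product, Prod.exists]
    constructor
    · rintro ⟨a, b, y, ⟨⟨h1, h2⟩, h3⟩, h4⟩
      exact ⟨a, b, h1, y, h2, h3, h4⟩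
    · rintro ⟨a, b, h1, y, h2, h3, h4⟩
      exact ⟨a, b, y, ⟨⟨h1, h2⟩, h3⟩, h4⟩
  have hself : ∀ K y, y ∈ P → y ∈ (rect P C ε K y).2 := fun K y hy =>
    Finset.mem_filter.2 ⟨hy, rfl⟩
  have hlt : ∀ K ∈ C, ∀ y, IsStart P C ε K y →
      ∀ a ∈ (rect P C ε K y).1, ∀ b ∈ (rect P C ε K y).2, a < b := by
    intro K hK y hs a ha b hb
    linarith [((rect_bounds hs).1 a ha).2, ((rect_bounds hs).2 b hb).1, (hC K hK).2.2]
  have huniq : ∀ x ∈ P, ∀ y ∈ P, x < y →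
      ∃! pr, pr ∈ W ∧ ((x ∈ pr.1 ∧ y ∈ pr.2) ∨ (x ∈ pr.2 ∧ y ∈ pr.1)) := by
    intro x hx y hy hxy
    obtain ⟨K, hK, hxK⟩ := exists_slice hx (hcov x hx y hy hxy)
    obtain ⟨z, hz, hs, heq⟩ := exists_start hy hxK
    refine ⟨rect P C ε K z, ⟨(hmemW _).2 ⟨K, hK, z, hz, hs, rfl⟩, Or.inl ⟨?_, ?_⟩⟩, ?_⟩
    · change x ∈ slice P C ε K z
      rwa [heq]
    · exact Finset.mem_filter.2 ⟨hy, heq.symm⟩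
    · rintro pr ⟨hpr, hor⟩
      obtain ⟨K', hK', z', hz', hs', rfl⟩ := (hmemW pr).1 hpr
      rcases hor with ⟨h1, h2⟩ | ⟨h1, h2⟩
      · have heq' : slice P C ε K' y = slice P C ε K' z' := (Finset.mem_filter.1 h2).2
        have h1 : x ∈ slice P C ε K' z' := h1
        rw [← heq'] at h1
        obtain rfl := slice_unique hε0 hK hK' hxK h1
        simp only [rect, ← heq', heq]
      · exact absurd (hlt K' hK' z' hs' y h2 x h1) (by linarith)
  have huniq' : ∀ x ∈ P, ∀ y ∈ P, x ≠ y →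
      ∃! pr, pr ∈ W ∧ ((x ∈ pr.1 ∧ y ∈ pr.2) ∨ (x ∈ pr.2 ∧ y ∈ pr.1)) := by
    intro x hx y hy hne
    rcases lt_or_gt_of_ne hne with h | h
    · exact huniq x hx y hy h
    · obtain ⟨pr, ⟨h1, h2⟩, h3⟩ := huniq y hy x hx h
      exact ⟨pr, ⟨h1, h2.symm.imp And.symm And.symm⟩,
        fun pr' h' => h3 pr' ⟨h'.1, h'.2.symm.imp And.symm And.symm⟩⟩
  refine ⟨W, ⟨⟨?_, fun x hx y hy hne => (huniq' x hx y hy hne).exists⟩, ?_⟩, huniq', ?_⟩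
  · intro pr hpr
    obtain ⟨K, hK, y, hy, hs, rfl⟩ := (hmemW pr).1 hpr
    refine ⟨fun x hx => (mem_slice.1 hx).1, Finset.filter_subset _ _, hs.1, ⟨y, hself K y hy⟩, ?_⟩
    exact Finset.disjoint_iff_ne.2 fun a ha b hb => (hlt K hK y hs a ha b hb).ne
  · intro pr hpr
    obtain ⟨K, hK, y, hy, hs, rfl⟩ := (hmemW pr).1 hpr
    exact wellSeparated_of hε0 hs.1 ⟨y, hself K y hy⟩ (rect_bounds hs).1 (rect_bounds hs).2
      rfl (by linarith) (by linarith)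
  · have h1 : W.card ≤ T.card := Finset.card_image_le
    have h2 : T.card ≤ 3 * C.card := card_starts_le hε0 hC
    omega
end

section
/- Fix ε > 0. For u = (a,b) ∈ ℝ² with a ≤ b, let shadow(u) = [a − ε(b−a), a] × [b, b + ε(b−a)], and for p ∈ ℝ² let V(p) = { q ∈ ℝ² : there exists u = (a,b) with a ≤ b such that p ∈ shadow(u) and q ∈ shadow(u) } be the vicinity of p. Then for every p = (x,y) with x < y there exist three points u₁, u₂, u₃ ∈ ℝ², each with first coordinate at most its second coordinate, such that every point q ∈ V(p) with first coordinate q₁ ≤ x lies in shadow(u₁) ∪ shadow(u₂) ∪ shadow(u₃). -/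
/-!
Write `D = y - x` and let `T = ε D / (1 + ε)`, the largest amount by which the lower edge of a
shadow square containing `(x, y)` can lie below `y`. The three squares with bottom-right corners
`(x, y)`, `(x, y - T)` and `(x - T, y - T)` have side lengths `ε D`, `T` and `ε D`. If a shadow
square with corner `(a, b)` contains `(x, y)`, then `x ≤ a` and `b ≤ y`, so it does not extend
beyond `x - ε D` on the left or `y + ε D` at the top. A point `q` of it with `q.1 ≤ x` is
therefore in the first square if `y ≤ q.2`. Otherwise `y - T ≤ q.2 < y`, and `q` is in the second
square if `x - T ≤ q.1` and in the third one if not, because `T ≤ ε D`.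
-/

theorem stmt19 (ε : ℝ) (hε : 0 < ε)
    (shadow : ℝ × ℝ → Set (ℝ × ℝ))
    (hshadow : ∀ u : ℝ × ℝ,
      shadow u = Set.Icc (u.1 - ε * (u.2 - u.1)) u.1 ×ˢ Set.Icc u.2 (u.2 + ε * (u.2 - u.1)))
    (Vic : ℝ × ℝ → Set (ℝ × ℝ))
    (hVic : ∀ p : ℝ × ℝ,
      Vic p = {q : ℝ × ℝ | ∃ u : ℝ × ℝ, u.1 ≤ u.2 ∧ p ∈ shadow u ∧ q ∈ shadow u}) :
    ∀ x y : ℝ, x < y →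
      ∃ u₁ u₂ u₃ : ℝ × ℝ, u₁.1 ≤ u₁.2 ∧ u₂.1 ≤ u₂.2 ∧ u₃.1 ≤ u₃.2 ∧
        ∀ q ∈ Vic (x, y), q.1 ≤ x → q ∈ shadow u₁ ∪ shadow u₂ ∪ shadow u₃ := by
  intro x y hxy
  obtain ⟨T, hT⟩ : ∃ T : ℝ, T * (1 + ε) = ε * (y - x) :=
    ⟨ε * (y - x) / (1 + ε), div_mul_cancel₀ _ (by positivity)⟩
  have hD : 0 < ε * (y - x) := mul_pos hε (by linarith)
  have hT0 : 0 < T := pos_of_mul_pos_left (hT ▸ hD) (by positivity)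
  have hεT : 0 < ε * T := mul_pos hε hT0
  have hTD : T ≤ y - x := by
    by_contra! h
    nlinarith [mul_pos hε (sub_pos.2 h)]
  refine ⟨(x, y), (x, y - T), (x - T, y - T), hxy.le, by simp only; linarith,
    by simp only; linarith, ?_⟩
  rintro ⟨r, s⟩ hq hr
  rw [hVic] at hq
  obtain ⟨⟨a, b⟩, hab, hp, hq⟩ := hq
  simp only [hshadow, Set.mem_prod, Set.mem_Icc, Set.mem_union] at *
  obtain ⟨⟨-, hxa⟩, hby, hyb⟩ := hp
  obtain ⟨⟨hr1, -⟩, hs1, hs2⟩ := hq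
  have ha : 0 ≤ ε * (a - x) := mul_nonneg hε.le (by linarith)
  have hb : 0 ≤ ε * (y - b) := mul_nonneg hε.le (by linarith)
  -- The top edge of the square reaches `y`, which bounds how far its bottom edge lies below `y`.
  have hbT : y - b ≤ T := by
    refine le_of_mul_le_mul_right ?_ (by positivity : 0 < 1 + ε)
    linarith
  rcases le_or_gt y s with hys | hys
  · left; left
    refine ⟨⟨?_, hr⟩, hys, ?_⟩ <;> linarith
  · rcases le_or_gt (x - T) r with hrT | hrT
    · left; right
      refine ⟨⟨?_, hr⟩, ?_, ?_⟩ <;> linarith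
    · right
      refine ⟨⟨?_, hrT.le⟩, ?_, ?_⟩ <;> linarith
end
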